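/- Let X be a set with |X| > 1, let R be a nontrivial element of the free group on X which is not a proper power (R = Sᵏ with k ≥ 1 implies k = 1), and let n ≥ 1. Then the image of R in the presented group G = ⟨X; Rⁿ⟩ has order exactly n. In particular, G has a nontrivial element of finite order if and only if n > 1. -/

import Mathlib

namespace KMS
open HNNExtension

section HNN
variable {G : Type} [Group G] {A B : Subgroup G} {φ : A ≃* B}

theorem hnn_conj (u : ℤˣ) (g : G) (hg : g ∈ toSubgroup A B u) :
    (t ^ (u : ℤ) * of g * (t ^ ((-u : ℤˣ) : ℤ)) : HNNExtension G A B φ)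
      = of (toSubgroupEquiv φ u ⟨g, hg⟩ : G) := by
  rcases Int.units_eq_one_or u with rfl | rfl
  · have := equiv_eq_conj (φ := φ) ⟨g, hg⟩
    simp only [Units.val_one, zpow_one, Units.val_neg, zpow_neg]
    exact this.symm
  · have := equiv_symm_eq_conj (φ := φ) ⟨g, hg⟩
    simp only [Units.val_one, zpow_one, Units.val_neg, zpow_neg, neg_neg]
    exact this.symm

theorem hnn_exists_word (x : HNNExtension G A B φ) :
    ∃ w : NormalWord.ReducedWord G A B, w.prod φ = x := by
  obtain ⟨d⟩ := NormalWord.TransversalPair.nonempty G A B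
  refine ⟨(x • (NormalWord.empty : NormalWord d)).toReducedWord, ?_⟩
  rw [NormalWord.prod_smul]; simp

theorem hnn_tf (htf : ∀ (g : G) (k : ℕ), 0 < k → g ^ k = 1 → g = 1)
    (x : HNNExtension G A B φ) (k : ℕ) (hk : 0 < k) (hx : x ^ k = 1) : x = 1 := by
  classical
  have hex : ∃ m, ∃ y, IsConj x y ∧ ∃ w : NormalWord.ReducedWord G A B,
      w.prod φ = y ∧ w.toList.length = m := by
    obtain ⟨w, hw⟩ := hnn_exists_word x
    exact ⟨_, x, IsConj.refl x, w, hw, rfl⟩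
  obtain ⟨y, hxy, w, hwy, hlen⟩ := Nat.find_spec hex
  have hmin := fun m hm => Nat.find_min hex (m := m) hm
  rw [← hlen] at hmin
  clear hlen
  have hpow : ∀ z, IsConj x z → z ^ k = 1 := by
    intro z hz
    have h := hz.pow k
    rw [hx] at h
    exact isConj_one_right.mp h
  rcases List.eq_nil_or_concat' w.toList with hl | ⟨l', ⟨u, g⟩, hl⟩
  · have hy : y = of w.head := by rw [← hwy]; simp [NormalWord.ReducedWord.prod, hl]
    have h1 := hpow y hxy
    rw [hy, ← map_pow] at h1
    have h2 := htf _ k hk (of_injective φ (h1.trans (map_one of).symm))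
    rw [h2, map_one] at hy
    subst hy
    exact isConj_one_left.mp hxy
  · exfalso
    have hch := w.chain
    rw [hl] at hch
    set f : ℤˣ × G → HNNExtension G A B φ := fun x => t ^ (x.1 : ℤ) * of x.2 with hf
    set g' := g * w.head with hg'
    set l2 := l' ++ [(u, g')] with hl2
    have hch2 : l2.IsChain (fun a b => a.2 ∈ toSubgroup A B a.1 → a.1 = b.1) := by
      rw [List.isChain_append] at hch ⊢
      simpa using hch
    have hy2 : IsConj x (l2.map f).prod := by
      refine hxy.trans (isConj_iff.mpr ⟨(of w.head)⁻¹, ?_⟩)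
      rw [← hwy]
      simp [NormalWord.ReducedWord.prod, hl, hl2, hg', mul_assoc, hf]
    have hcyc : ∀ a ∈ l2.head?, g' ∈ toSubgroup A B u → u = a.1 := by
      intro a ha hgu
      by_contra hne
      rcases l' with _ | ⟨⟨u1, g1⟩, l''⟩
      · simp [hl2] at ha
        subst ha
        exact hne rfl
      · simp [hl2] at ha
        subst ha
        have hu1 : u1 = -u := by
          rcases Int.units_eq_one_or u with rfl | rfl <;>
          rcases Int.units_eq_one_or u1 with rfl | rfl <;> simp_all
        subst hu1
        refine hmin l''.length (by simp [hl]) ⟨_, hy2.trans (isConj_iff.mpr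
          ⟨t ^ (u : ℤ) * of g', rfl⟩), ⟨(toSubgroupEquiv φ u ⟨g', hgu⟩ : G) * g1, l'', ?_⟩, ?_, rfl⟩
        · have := hch2
          rw [hl2, List.cons_append] at this
          exact (List.isChain_append.mp (List.isChain_cons.mp this).2).1
        · simp only [NormalWord.ReducedWord.prod, map_mul, ← hnn_conj, hl2]
          simp [hf, mul_assoc]
    have hflat : ∀ j : ℕ, (List.replicate j l2).flatten.IsChain
        (fun a b => a.2 ∈ toSubgroup A B a.1 → a.1 = b.1) := by
      intro j
      rw [List.isChain_flatten]
      · refine ⟨?_, ?_⟩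
        · intro l hl
          rw [List.eq_of_mem_replicate hl]; exact hch2
        · refine List.isChain_replicate_of_rel _ ?_
          intro a ha b hb
          have : a = (u, g') := by simpa [hl2] using ha.symm
          subst this
          exact hcyc b hb
      · intro h
        have := List.eq_of_mem_replicate h
        simp [hl2] at this
    have := ReducedWord.toList_eq_nil_of_mem_of_range φ ⟨1, _, hflat k⟩ (by
      refine ⟨1, ?_⟩
      have h1 := hpow _ hy2
      rw [map_one, ← h1]
      simp [NormalWord.ReducedWord.prod, List.map_flatten, List.prod_flatten, hf])
    have h0 := congrArg List.length this
    simp [hl2] at h0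
    omega

end HNN

theorem hnn_exists {H P : Type} [Group H] [Group P] (f0 f1 : P →* H)
    (h0 : Function.Injective f0) (h1 : Function.Injective f1) :
    ∃ (K : Type) (_ : Group K) (i : H →* K) (T : K), Function.Injective i ∧
      (∀ p, T * i (f0 p) = i (f1 p) * T) ∧
      (∀ (L : Type) [Group L] (f : H →* L) (x : L), (∀ p, x * f (f0 p) = f (f1 p) * x) →
        ∃ g : K →* L, (∀ h, g (i h) = f h) ∧ g T = x) ∧
      ((∀ (g : H) (k : ℕ), 0 < k → g ^ k = 1 → g = 1) →
        (∀ (g : K) (k : ℕ), 0 < k → g ^ k = 1 → g = 1)) := by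
  let φ : f0.range ≃* f1.range :=
    (MonoidHom.ofInjective h0).symm.trans (MonoidHom.ofInjective h1)
  have hφ : ∀ p, (φ ⟨f0 p, p, rfl⟩ : H) = f1 p := by
    intro p
    have : (MonoidHom.ofInjective h0).symm ⟨f0 p, p, rfl⟩ = p := by
      rw [MulEquiv.symm_apply_eq]; rfl
    simp only [φ, MulEquiv.trans_apply, this]; rfl
  refine ⟨HNNExtension H f0.range f1.range φ, inferInstance, of, t, of_injective φ, ?_, ?_, ?_⟩
  · intro p
    have := t_mul_of (φ := φ) ⟨f0 p, p, rfl⟩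
    rwa [hφ] at this
  · intro L _ f x hx
    refine ⟨lift f x ?_, fun h => lift_of _ _ _ _, lift_t _ _ _⟩
    rintro ⟨_, p, rfl⟩
    rw [hφ]; exact hx p
  · intro h g k
    exact hnn_tf h g k

theorem root_exists {H : Type} [Group H] (b : H) (hb : ∀ k : ℤ, b ^ k = 1 → k = 0) (p : ℕ)
    (hp : 0 < p) :
    ∃ (K : Type) (_ : Group K) (i : H →* K) (T : K), Function.Injective i ∧ T ^ p = i b := by
  let Gs : Bool → Type := fun c => cond c H (Multiplicative ℤ)
  let _ : ∀ c, Group (Gs c) := fun c => by cases c <;> (dsimp [Gs]; infer_instance)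
  let ψ : ∀ c, Multiplicative ℤ →* Gs c := fun c => match c with
    | true => zpowersHom H b
    | false => zpowersHom (Multiplicative ℤ) (Multiplicative.ofAdd (p : ℤ))
  have hψ : ∀ c, Function.Injective (ψ c) := by
    intro c
    rw [injective_iff_map_eq_one]
    intro k hk
    cases c
    · have : (Multiplicative.ofAdd (p : ℤ)) ^ (Multiplicative.toAdd k) = 1 := hk
      have h2 := congrArg Multiplicative.toAdd this
      simp at h2
      rcases h2 with h2 | h2
      · exact h2
      · omega
    · have : b ^ (Multiplicative.toAdd k) = 1 := hk
      exact hb _ this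
  refine ⟨Monoid.PushoutI ψ, inferInstance, Monoid.PushoutI.of (φ := ψ) true,
    Monoid.PushoutI.of (φ := ψ) false (Multiplicative.ofAdd (1 : ℤ)), 
    Monoid.PushoutI.of_injective hψ true, ?_⟩
  have e1 := Monoid.PushoutI.of_apply_eq_base ψ true (Multiplicative.ofAdd 1)
  have e2 := Monoid.PushoutI.of_apply_eq_base ψ false (Multiplicative.ofAdd 1)
  have h1 : ψ true (Multiplicative.ofAdd 1) = b := by
    change b ^ (1 : ℤ) = b
    simp
  have h2 : ψ false (Multiplicative.ofAdd 1) = ((Multiplicative.ofAdd 1 : Multiplicative ℤ) ^ p) := by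
    change (Multiplicative.ofAdd (p : ℤ)) ^ (1 : ℤ) = _
    rw [← ofAdd_nsmul]; simp
  rw [h1] at e1
  rw [h2, ← e1] at e2
  rw [← e2]
  exact (map_pow _ _ _).symm

end KMS

namespace KMS
open scoped Classical in
/-- the endomorphism `b ↦ b ^ p` -/
noncomputable def powGen {X : Type} (b : X) (p : ℕ) : FreeGroup X →* FreeGroup X :=
  FreeGroup.lift fun z => if z = b then FreeGroup.of b ^ p else FreeGroup.of z

open scoped Classical in
/-- exponent sum -/
noncomputable def expo {X : Type} (x : X) : FreeGroup X →* Multiplicative ℤ :=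
  FreeGroup.lift fun z => if z = x then Multiplicative.ofAdd 1 else 1

theorem wreath_hom {X : Type} (b : X) (p : ℕ) (hp : 0 < p) :
    ∃ (Q : Type) (_ : Group Q) (Φ : FreeGroup X →* RegularWreathProduct (FreeGroup X) Q),
      (∀ w, (Φ (powGen b p w)).right = 1) ∧
      (∀ w, (Φ (powGen b p w)).left 1 = w) ∧
      (∀ x, x ≠ b → ∀ w, ∀ q, q ≠ 1 → expo x ((Φ (powGen b p w)).left q) = 1) := by
  classical
  have _ : NeZero p := ⟨hp.ne'⟩
  let Q := Multiplicative (ZMod p)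
  let T : RegularWreathProduct (FreeGroup X) Q :=
    ⟨fun q => if q = 1 then FreeGroup.of b else 1, Multiplicative.ofAdd 1⟩
  have hT : ∀ j : ℕ, j ≤ p → (T ^ j).right = Multiplicative.ofAdd (j : ZMod p) ∧
      ∀ q : Q, (T ^ j).left q = if (Multiplicative.toAdd q).val < j then FreeGroup.of b else 1 := by
    intro j
    induction j with
    | zero => intro _; simp
    | succ j ih =>
      intro hj
      obtain ⟨h1, h2⟩ := ih (by omega)
      rw [pow_succ]
      refine ⟨?_, ?_⟩
      · rw [RegularWreathProduct.mul_right, h1]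
        simp [T, ofAdd_add]
      · intro q
        rw [RegularWreathProduct.mul_left, Pi.mul_apply, h1, h2]
        have hq : ((Multiplicative.ofAdd (j : ZMod p))⁻¹ * q = 1) ↔ (Multiplicative.toAdd q).val = j := by
          rw [inv_mul_eq_one]
          constructor
          · intro h
            rw [← h]
            exact ZMod.val_cast_of_lt (by omega)
          · intro h
            apply Multiplicative.toAdd.injective
            rw [← h]
            simp
        simp only [T, hq]
        split_ifs <;> first | omega | simp
  have hTp : (T ^ p).right = 1 ∧ ∀ q : Q, (T ^ p).left q = FreeGroup.of b := by
    obtain ⟨h1, h2⟩ := hT p le_rfl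
    refine ⟨by simpa using h1, fun q => ?_⟩
    rw [h2, if_pos (ZMod.val_lt _)]
  let Φ : FreeGroup X →* RegularWreathProduct (FreeGroup X) Q := FreeGroup.lift fun z =>
    if z = b then T else ⟨fun q => if q = 1 then FreeGroup.of z else 1, 1⟩
  have hr : ∀ w, (Φ (powGen b p w)).right = 1 := by
    intro w
    have : (RegularWreathProduct.rightHom.comp (Φ.comp (powGen b p))) = 1 := by
      ext z
      by_cases hz : z = b
      · subst hz
        simpa [Φ, powGen, RegularWreathProduct.rightHom] using hTp.1
      · simp [Φ, powGen, hz, RegularWreathProduct.rightHom]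
    exact DFunLike.congr_fun this w
  let ev : Q → FreeGroup X →* FreeGroup X := fun q =>
    { toFun := fun w => (Φ (powGen b p w)).left q
      map_one' := by simp
      map_mul' := by intro v w; simp [hr] }
  refine ⟨Q, inferInstance, Φ, hr, ?_, ?_⟩
  · intro w
    have : ev 1 = MonoidHom.id _ := by
      ext z
      by_cases hz : z = b
      · subst hz
        simpa [ev, Φ, powGen] using hTp.2 1
      · simp [ev, Φ, powGen, hz]
    exact DFunLike.congr_fun this w
  · intro x hx w q hq
    have : (expo x).comp (ev q) = 1 := by
      ext z
      by_cases hz : z = b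
      · subst hz
        have := hTp.2 q
        simp [ev, Φ, powGen, this, expo, hx.symm]
      · simp [ev, Φ, powGen, hz, hq]
    exact DFunLike.congr_fun this w

theorem powGen_injective {X : Type} (b : X) (p : ℕ) (hp : 0 < p) :
    Function.Injective (powGen b p) := by
  obtain ⟨Q, _, Φ, _, h, _⟩ := wreath_hom b p hp
  intro v w hvw
  rw [← h v, ← h w, hvw]

theorem powGen_root {X : Type} (b x : X) (hxb : x ≠ b) (p : ℕ) (hp : 0 < p) (R S : FreeGroup X)
    (hR : expo x R ≠ 1) (k : ℕ) (h : powGen b p R = S ^ k) : ∃ s, R = s ^ k := by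
  obtain ⟨Q, _, Φ, h1, h2, h3⟩ := wreath_hom b p hp
  have hc : Φ S * Φ (powGen b p R) = Φ (powGen b p R) * Φ S := by
    rw [h, map_pow, ← pow_succ, ← pow_succ']
  by_cases hS : (Φ S).right = 1
  · refine ⟨(Φ S).left 1, ?_⟩
    have : ∀ j : ℕ, ((Φ S) ^ j).right = 1 ∧ ((Φ S) ^ j).left 1 = (Φ S).left 1 ^ j := by
      intro j
      induction j with
      | zero => simp
      | succ j ih => 
        rw [pow_succ, pow_succ]
        simp [ih, hS]
    rw [← (this k).2, ← map_pow, ← h, h2]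
  · exfalso
    have := congrFun (congrArg RegularWreathProduct.left hc) (Φ S).right
    simp only [RegularWreathProduct.mul_left, Pi.mul_apply, h1, inv_mul_cancel, h2] at this
    have h4 := congrArg (expo x) this
    simp only [map_mul, h3 x hxb R _ hS] at h4
    simp [mul_comm] at h4
    exact hR h4
end KMS

namespace KMS
open FreeGroup (of lift_apply_of)

open scoped Classical in
/-- the endomorphism killing one generator -/
noncomputable def kill {X : Type} (x : X) : FreeGroup X →* FreeGroup X :=
  FreeGroup.lift fun z => if z = x then 1 else FreeGroup.of z

theorem mk_cons_eq {X : Type} (z : X) (c : Bool) (L : List (X × Bool)) :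
    FreeGroup.mk ((z, c) :: L) = (cond c (FreeGroup.of z) (FreeGroup.of z)⁻¹) * FreeGroup.mk L := by
  cases c <;> simp [FreeGroup.of, FreeGroup.mul_mk, FreeGroup.inv_mk, FreeGroup.invRev]

open scoped Classical in
theorem kill_mk {X : Type} (x : X) (L : List (X × Bool)) :
    kill x (FreeGroup.mk L) = FreeGroup.mk (L.filter fun p => p.1 ≠ x) := by
  induction L with
  | nil => simp [← FreeGroup.one_eq_mk]
  | cons p L ih =>
    obtain ⟨z, c⟩ := p
    by_cases hz : z = x
    · subst hz
      rw [mk_cons_eq, map_mul, ih]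
      cases c <;> simp [kill]
    · rw [mk_cons_eq, map_mul, ih, List.filter_cons_of_pos (by simpa using hz), mk_cons_eq]
      cases c <;> simp [kill, hz]

theorem kill_mk_self {X : Type} (x : X) (L : List (X × Bool)) (h : ∀ c, (x, c) ∉ L) :
    kill x (FreeGroup.mk L) = FreeGroup.mk L := by
  classical
  rw [kill_mk, List.filter_eq_self.mpr]
  rintro ⟨z, c⟩ hz
  simp only [ne_eq, decide_not, Bool.not_eq_eq_eq_not, Bool.not_true, decide_eq_false_iff_not]
  rintro rfl
  exact h c hz

theorem isConj_kill {X : Type} (x : X) (R R' : FreeGroup X) (h : IsConj R R')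
    (h' : kill x R' = R') : IsConj R (kill x R) := by
  have := (kill x).map_isConj h
  rw [h'] at this
  exact h.trans this.symm

/-- not a proper power -/
def NP {X : Type} (R : FreeGroup X) : Prop :=
  ∀ (S : FreeGroup X) (k : ℕ), 1 ≤ k → R = S ^ k → k = 1

theorem NP.ne_one {X : Type} {R : FreeGroup X} (h : NP R) : R ≠ 1 := by
  rintro rfl
  have := h 1 2 (by norm_num) (by simp)
  omega

theorem NP.conj {X : Type} {R R' : FreeGroup X} (h : NP R) (hc : IsConj R R') : NP R' := by
  intro S k hk e
  obtain ⟨c, hc⟩ := isConj_iff.mp hc.symm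
  refine h (c * S * c⁻¹) k hk ?_
  rw [conj_pow, ← e, hc]

/-- the package proved by induction -/
structure Good {X : Type} (n : ℕ) (R : FreeGroup X) : Prop where
  fs : ∀ x, ¬ IsConj R (kill x R) → ∀ w, kill x w = w →
    w ∈ Subgroup.normalClosure {R ^ n} → w = 1
  ord : R ≠ 1 → ∀ m : ℕ, R ^ m ∈ Subgroup.normalClosure {R ^ n} → n ∣ m
  tf : n = 1 → NP R → ∀ (g : FreeGroup X) (k : ℕ), 0 < k →
    g ^ k ∈ Subgroup.normalClosure {R ^ n} → g ∈ Subgroup.normalClosure {R ^ n}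

theorem nc_hom {F K : Type} [Group F] [Group K] (f : F →* K) {r w : F} (hr : f r = 1)
    (hw : w ∈ Subgroup.normalClosure {r}) : f w = 1 := by
  have : Subgroup.normalClosure {r} ≤ f.ker :=
    Subgroup.normalClosure_le_normal (by simpa [MonoidHom.mem_ker] using hr)
  exact this hw

theorem hom_conj_pow {F K : Type} [Group F] [Group K] (f : F →* K) {r r' : F} (h : IsConj r r')
    {n : ℕ} (hr : f r ^ n = 1) : f r' ^ n = 1 := by
  have := (f.map_isConj h).pow n
  rw [hr] at this
  exact isConj_one_right.mp this

/-- rewriting map -/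
def theta {X : Type} (t : X) : FreeGroup ({y : X // y ≠ t} × ℤ) →* FreeGroup X :=
  FreeGroup.lift fun p => of t ^ p.2 * of p.1.1 * (of t ^ p.2)⁻¹

/-- shift -/
def shift {Y : Type} (j : ℤ) (p : Y × ℤ) : Y × ℤ := (p.1, p.2 + j)

theorem theta_shift {X : Type} (t : X) (j : ℤ) (w) :
    theta t (FreeGroup.map (shift j) w) = of t ^ j * theta t w * (of t ^ j)⁻¹ := by
  have : (theta t).comp (FreeGroup.map (shift j)) =
      (MulAut.conj (of t ^ j)).toMonoidHom.comp (theta t) := by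
    ext p
    simp only [theta, shift, MonoidHom.comp_apply, FreeGroup.map.of, lift_apply_of, MulEquiv.toMonoidHom_eq_coe,
      MonoidHom.coe_coe, MulAut.conj_apply]
    group
  exact DFunLike.congr_fun this w

open scoped Classical in
theorem rewriting {X : Type} (t : X) (L : List (X × Bool)) :
    ∃ L', FreeGroup.mk L = theta t (FreeGroup.mk L') *
      of t ^ (Multiplicative.toAdd (expo t (FreeGroup.mk L))) ∧
      L'.length = (L.filter (fun p => p.1 ≠ t)).length := by
  induction L with
  | nil => exact ⟨[], by simp [← FreeGroup.one_eq_mk], by simp⟩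
  | cons p L ih =>
    obtain ⟨z, c⟩ := p
    obtain ⟨L', h1, h2⟩ := ih
    by_cases hz : z = t
    · subst hz
      set j : ℤ := cond c 1 (-1) with hj
      have hz : cond c (of z) (of z)⁻¹ = of z ^ j := by cases c <;> simp [hj]
      refine ⟨L'.map fun x => (shift j x.1, x.2), ?_, by simpa using h2⟩
      rw [← FreeGroup.map.mk, theta_shift, mk_cons_eq, hz, map_mul, map_zpow]
      have he : expo z (of z) = Multiplicative.ofAdd 1 := by simp [expo]
      rw [he, toAdd_mul, toAdd_zpow, toAdd_ofAdd, zpow_add]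
      conv_lhs => rw [h1]
      simp [mul_assoc]
    · refine ⟨((⟨z, hz⟩, 0), c) :: L', ?_, by simp [hz, h2]⟩
      have he : expo t (FreeGroup.mk ((z, c) :: L)) = expo t (FreeGroup.mk L) := by
        rw [mk_cons_eq, map_mul]
        cases c <;> simp [expo, hz]
      rw [he, mk_cons_eq, mk_cons_eq, map_mul, mul_assoc, ← h1]
      congr 1
      cases c <;> simp [theta]

/-- generators of the base group -/
abbrev SS {X : Type} (t : X) (a : {y : X // y ≠ t}) (N : ℤ) : Type :=
  {p : {y : X // y ≠ t} × ℤ // p.1 = a → 0 ≤ p.2 ∧ p.2 ≤ N}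

theorem struct {X : Type} (t : X) (R : FreeGroup X) (n : ℕ) (a : {y : X // y ≠ t}) (N : ℤ)
    (hN : 0 ≤ N) (r : FreeGroup (SS t a N))
    (hr : IsConj R (theta t (FreeGroup.map Subtype.val r)))
    (hfs0 : ∀ w, kill (⟨(a, 0), fun _ => ⟨le_rfl, hN⟩⟩ : SS t a N) w = w →
      w ∈ Subgroup.normalClosure {r ^ n} → w = 1)
    (hfsN : ∀ w, kill (⟨(a, N), fun _ => ⟨hN, le_rfl⟩⟩ : SS t a N) w = w →
      w ∈ Subgroup.normalClosure {r ^ n} → w = 1) :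
    ∃ (K : Type) (_ : Group K) (Ψ : FreeGroup X →* K),
      (∀ v, Ψ (theta t (FreeGroup.map Subtype.val v)) = 1 ↔ v ∈ Subgroup.normalClosure {r ^ n}) ∧
      (∀ w ∈ Subgroup.normalClosure {R ^ n}, Ψ w = 1) ∧
      ((∀ g (k : ℕ), 0 < k → g ^ k ∈ Subgroup.normalClosure {r ^ n} →
          g ∈ Subgroup.normalClosure {r ^ n}) →
        (∀ g (k : ℕ), 0 < k → Ψ g ^ k = 1 → Ψ g = 1) ∧
        ∀ w, Ψ w = 1 → w ∈ Subgroup.normalClosure {R ^ n}) := by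
  classical
  let NN := Subgroup.normalClosure {r ^ n}
  let H := FreeGroup (SS t a N) ⧸ NN
  let π : FreeGroup (SS t a N) →* H := QuotientGroup.mk' NN
  have hπ : ∀ v, π v = 1 ↔ v ∈ NN := fun v => QuotientGroup.eq_one_iff v
  let TA := {p : {y : X // y ≠ t} × ℤ // p.1 = a → 0 ≤ p.2 ∧ p.2 < N}
  let i0 : TA → SS t a N := fun p => ⟨p.1, fun h => ⟨(p.2 h).1, (p.2 h).2.le⟩⟩
  let i1 : TA → SS t a N := fun p => ⟨(p.1.1, p.1.2 + 1), fun h => by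
    have := p.2 h
    constructor <;> simp only <;> omega⟩
  have hi0 : Function.Injective i0 := by
    intro p q h
    have := congrArg Subtype.val h
    exact Subtype.ext this
  have hi1 : Function.Injective i1 := by
    intro p q h
    have := congrArg Subtype.val h
    simp only [i1, Prod.mk.injEq, add_left_inj] at this
    exact Subtype.ext (Prod.ext this.1 this.2)
  have hf0 : Function.Injective (π.comp (FreeGroup.map i0)) := by
    rw [injective_iff_map_eq_one]
    intro v hv
    have h1 := hfsN (FreeGroup.map i0 v) (by
      have : (kill (⟨(a, N), fun _ => ⟨hN, le_rfl⟩⟩ : SS t a N)).comp (FreeGroup.map i0)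
          = FreeGroup.map i0 := by
        ext p
        have hp : i0 p ≠ (⟨(a, N), fun _ => ⟨hN, le_rfl⟩⟩ : SS t a N) := by
          intro h
          have := congrArg Subtype.val h
          have h2 := p.2
          simp only [i0] at this
          rw [this] at h2
          have := h2 rfl
          simp at this
        simp [kill, hp]
      exact DFunLike.congr_fun this v) ((hπ _).mp hv)
    exact (injective_iff_map_eq_one _).mp (FreeGroup.map_injective hi0) v h1
  have hf1 : Function.Injective (π.comp (FreeGroup.map i1)) := by
    rw [injective_iff_map_eq_one]
    intro v hv
    have h1 := hfs0 (FreeGroup.map i1 v) (by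
      have : (kill (⟨(a, 0), fun _ => ⟨le_rfl, hN⟩⟩ : SS t a N)).comp (FreeGroup.map i1)
          = FreeGroup.map i1 := by
        ext p
        have hp : i1 p ≠ (⟨(a, 0), fun _ => ⟨le_rfl, hN⟩⟩ : SS t a N) := by
          intro h
          have := congrArg Subtype.val h
          have h2 := p.2
          simp only [i1, Prod.mk.injEq] at this
          have := h2 this.1
          omega
        simp [kill, hp]
      exact DFunLike.congr_fun this v) ((hπ _).mp hv)
    exact (injective_iff_map_eq_one _).mp (FreeGroup.map_injective hi1) v h1
  obtain ⟨K, _, i, T, hi, hT, hU, hTF⟩ := hnn_exists _ _ hf0 hf1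
  let Ψ : FreeGroup X →* K := FreeGroup.lift fun z => if h : z = t then T else
    i (π (of ⟨(⟨z, h⟩, 0), fun _ => ⟨le_rfl, hN⟩⟩))
  have hΨt : Ψ (of t) = T := by simp [Ψ]
  have hΨz : ∀ y : {y : X // y ≠ t}, Ψ (of y.1) = i (π (of ⟨(y, 0), fun _ => ⟨le_rfl, hN⟩⟩)) := by
    intro y
    have := y.2
    simp [Ψ, this]
  have hTp : ∀ p : TA, T * i (π (of (i0 p))) * T⁻¹ = i (π (of (i1 p))) := by
    intro p
    have := hT (of p)
    simp only [MonoidHom.comp_apply, FreeGroup.map.of] at this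
    rw [this]; simp
  have key : ∀ (y : {y : X // y ≠ t}) (j : ℤ) (h : y = a → 0 ≤ j ∧ j ≤ N),
      T ^ j * i (π (of ⟨(y, 0), fun _ => ⟨le_rfl, hN⟩⟩)) * (T ^ j)⁻¹ = i (π (of ⟨(y, j), h⟩)) := by
    intro y j
    induction j using Int.induction_on with
    | zero => intro h; simp
    | succ j ih =>
      intro h
      have h' : y = a → 0 ≤ (j : ℤ) ∧ (j : ℤ) < N := fun e => by have := h e; omega
      have e1 := ih (fun e => ⟨(h' e).1, (h' e).2.le⟩)
      have e2 := hTp ⟨(y, j), h'⟩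
      simp only [i0, i1] at e2
      rw [← e1] at e2
      rw [← e2, add_comm (j : ℤ) 1, zpow_add, zpow_one]
      simp [mul_assoc]
    | pred j ih =>
      intro h
      have hy : y ≠ a := fun e => by have := h e; omega
      have e1 := ih (fun e => absurd e hy)
      have e2 := hTp ⟨(y, -j - 1), fun e => absurd e hy⟩
      simp only [i0, i1, sub_add_cancel] at e2
      rw [← e1] at e2
      have e3 : i (π (of ⟨(y, -j - 1), h⟩)) =
          T⁻¹ * (T * i (π (of ⟨(y, -j - 1), h⟩)) * T⁻¹) * T := by group
      rw [e3, e2, sub_eq_add_neg, add_comm (-(j : ℤ)) (-1), zpow_add, zpow_neg_one]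
      simp [mul_assoc]
  have hcomp : ∀ v, Ψ (theta t (FreeGroup.map Subtype.val v)) = i (π v) := by
    intro v
    have : Ψ.comp ((theta t).comp (FreeGroup.map Subtype.val)) = i.comp π := by
      ext ⟨⟨y, j⟩, h⟩
      simp only [MonoidHom.comp_apply, FreeGroup.map.of, theta, lift_apply_of, map_mul, map_zpow, map_inv,
        hΨt, hΨz]
      exact key y j h
    exact DFunLike.congr_fun this v
  have hone : ∀ v, Ψ (theta t (FreeGroup.map Subtype.val v)) = 1 ↔ v ∈ NN := by
    intro v
    rw [hcomp, ← hπ, ← map_one i, hi.eq_iff]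
  have hRn : Ψ (R ^ n) = 1 := by
    rw [map_pow]
    refine hom_conj_pow Ψ hr.symm ?_
    rw [← map_pow, ← map_pow, ← map_pow, hone]
    exact Subgroup.subset_normalClosure rfl
  refine ⟨K, inferInstance, Ψ, hone, fun w hw => nc_hom Ψ hRn hw, ?_⟩
  intro hbase
  have hK := hTF (by
    intro g k hk hg
    obtain ⟨v, rfl⟩ := QuotientGroup.mk'_surjective NN g
    change π v ^ k = 1 at hg
    change π v = 1
    rw [← map_pow, hπ] at hg
    rw [hπ]
    exact hbase v k hk hg)
  refine ⟨fun g k => hK (Ψ g) k, ?_⟩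
  let MM := Subgroup.normalClosure {R ^ n}
  let ρ : FreeGroup X →* FreeGroup X ⧸ MM := QuotientGroup.mk' MM
  have hρ : ∀ v, ρ v = 1 ↔ v ∈ MM := fun v => QuotientGroup.eq_one_iff v
  let f : H →* FreeGroup X ⧸ MM := QuotientGroup.lift NN
    (ρ.comp ((theta t).comp (FreeGroup.map Subtype.val))) (by
      intro v hv
      refine nc_hom _ ?_ hv
      have h1 : ρ R ^ n = 1 := by
        rw [← map_pow, hρ]
        exact Subgroup.subset_normalClosure rfl
      simpa using hom_conj_pow ρ hr h1)
  have hf : ∀ v, f (π v) = ρ (theta t (FreeGroup.map Subtype.val v)) := fun v => rfl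
  obtain ⟨g, hg1, hg2⟩ := hU _ f (ρ (of t)) (by
    intro p
    rw [← mul_inv_eq_iff_eq_mul]
    have : (MulAut.conj (ρ (of t))).toMonoidHom.comp (f.comp (π.comp (FreeGroup.map i0)))
        = f.comp (π.comp (FreeGroup.map i1)) := by
      ext ⟨⟨y, j⟩, h⟩
      simp only [MonoidHom.comp_apply, FreeGroup.map.of, hf, MulEquiv.toMonoidHom_eq_coe,
        MonoidHom.coe_coe, MulAut.conj_apply, i0, i1, ← map_mul, ← map_inv]
      congr 1
      simp only [theta, lift_apply_of]
      group
    exact DFunLike.congr_fun this p)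
  have hgΨ : ∀ w, g (Ψ w) = ρ w := by
    intro w
    have : g.comp Ψ = ρ := by
      ext z
      by_cases hz : z = t
      · subst hz
        simp [hΨt, hg2]
      · simp only [MonoidHom.comp_apply]
        rw [hΨz ⟨z, hz⟩, hg1, hf]
        simp [theta]
    exact DFunLike.congr_fun this w
  intro w hw
  rw [← hρ, ← hgΨ, hw, map_one]

end KMS

namespace KMS
open FreeGroup (of lift_apply_of)

theorem lift_list {α : Type} (P : α → Prop) (L : List (α × Bool)) (h : ∀ p ∈ L, P p.1) :
    ∃ L' : List ({a // P a} × Bool), L'.map (fun x => (x.1.val, x.2)) = L := by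
  induction L with
  | nil => exact ⟨[], rfl⟩
  | cons p L ih =>
    obtain ⟨L', hL'⟩ := ih fun q hq => h q (List.mem_cons_of_mem _ hq)
    exact ⟨(⟨p.1, h p List.mem_cons_self⟩, p.2) :: L', by simp [hL']⟩

theorem core {X : Type} (t : X) (R : FreeGroup X) (m n : ℕ)
    (IH : ∀ (Z : Type) (L : List (Z × Bool)), L.length ≤ m → Good n (FreeGroup.mk L))
    (L1 : List (({y : X // y ≠ t} × ℤ) × Bool)) (hc : IsConj R (theta t (FreeGroup.mk L1)))
    (hlen : L1.length ≤ m)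
    (hmin : ∀ L2, IsConj R (theta t (FreeGroup.mk L2)) → L1.length ≤ L2.length)
    (a : {y : X // y ≠ t}) (ha : ∃ i c, ((a, i), c) ∈ L1) :
    ∃ (N : ℤ) (hN : 0 ≤ N) (r : FreeGroup (SS t a N)), Good n r ∧
      IsConj R (theta t (FreeGroup.map Subtype.val r)) ∧
      (¬ IsConj r (kill ⟨(a, 0), fun _ => ⟨le_rfl, hN⟩⟩ r)) ∧
      (¬ IsConj R (kill t R) → ∃ s : SS t a N, s.1.2 ≠ 0 ∧ ¬ IsConj r (kill s r)) ∧
    ∃ (K : Type) (_ : Group K) (Ψ : FreeGroup X →* K),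
      (∀ v, Ψ (theta t (FreeGroup.map Subtype.val v)) = 1 ↔ v ∈ Subgroup.normalClosure {r ^ n}) ∧
      (∀ w ∈ Subgroup.normalClosure {R ^ n}, Ψ w = 1) ∧
      ((∀ g (k : ℕ), 0 < k → g ^ k ∈ Subgroup.normalClosure {r ^ n} →
          g ∈ Subgroup.normalClosure {r ^ n}) →
        (∀ g (k : ℕ), 0 < k → Ψ g ^ k = 1 → Ψ g = 1) ∧
        ∀ w, Ψ w = 1 → w ∈ Subgroup.normalClosure {R ^ n}) := by
  classical
  let I : Finset ℤ := ((L1.map (·.1)).toFinset.filter (fun p => p.1 = a)).image Prod.snd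
  have hI : ∀ i, i ∈ I ↔ ∃ c, ((a, i), c) ∈ L1 := by
    intro i
    simp only [I, Finset.mem_image, Finset.mem_filter, List.mem_toFinset, List.mem_map]
    constructor
    · rintro ⟨⟨y, j⟩, ⟨⟨⟨q, c⟩, hq, rfl⟩, rfl⟩, rfl⟩
      exact ⟨c, hq⟩
    · rintro ⟨c, hc⟩
      exact ⟨(a, i), ⟨⟨_, hc, rfl⟩, rfl⟩, rfl⟩
  have hIne : I.Nonempty := by
    obtain ⟨i, c, h⟩ := ha
    exact ⟨i, (hI i).mpr ⟨c, h⟩⟩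
  set lo := I.min' hIne with hlo
  set hi := I.max' hIne with hhi
  have hlohi : lo ≤ hi := Finset.min'_le_max' I hIne
  let L2 := L1.map fun x => (shift (-lo) x.1, x.2)
  have hL2 : IsConj R (theta t (FreeGroup.mk L2)) := by
    refine hc.trans ?_
    rw [← FreeGroup.map.mk, theta_shift]
    exact isConj_iff.mpr ⟨_, rfl⟩
  have hmem : ∀ i c, ((a, i), c) ∈ L1 → ((a, i - lo), c) ∈ L2 := by
    intro i c h
    exact List.mem_map.mpr ⟨_, h, rfl⟩
  have hN : 0 ≤ hi - lo := by omega
  obtain ⟨L3, hL3⟩ := lift_list (fun p : {y : X // y ≠ t} × ℤ => p.1 = a → 0 ≤ p.2 ∧ p.2 ≤ hi - lo)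
    L2 (by
      intro p hp hpa
      obtain ⟨⟨⟨y, j⟩, c⟩, hq, rfl⟩ := List.mem_map.mp hp
      simp only [shift] at hpa ⊢
      subst hpa
      have h1 := (hI j).mpr ⟨c, hq⟩
      have h2 := Finset.min'_le I j h1
      have h3 := Finset.le_max' I j h1
      omega)
  have hlen3 : L3.length = L1.length := by
    have := congrArg List.length hL3
    simpa [L2] using this
  have hmap : FreeGroup.map Subtype.val (FreeGroup.mk L3) = FreeGroup.mk L2 := by
    rw [FreeGroup.map.mk, hL3]
  have hconj : IsConj R (theta t (FreeGroup.map Subtype.val (FreeGroup.mk L3))) := by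
    rw [hmap]; exact hL2
  have hletter : ∀ s : SS t a (hi - lo), (∃ c, (s.1, c) ∈ L2) →
      ¬ IsConj (FreeGroup.mk L3) (kill s (FreeGroup.mk L3)) := by
    rintro s ⟨c, hsc⟩ h
    have hs3 : (s, c) ∈ L3 := by
      rw [← hL3] at hsc
      obtain ⟨⟨s', c'⟩, hq, e⟩ := List.mem_map.mp hsc
      simp only [Prod.mk.injEq] at e
      obtain ⟨e1, e2⟩ := e
      have := Subtype.ext e1
      subst this; subst e2
      exact hq
    rw [kill_mk] at h
    have h2 := ((theta t).comp (FreeGroup.map Subtype.val)).map_isConj h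
    simp only [MonoidHom.comp_apply] at h2
    have h3 := hconj.trans h2
    rw [FreeGroup.map.mk] at h3
    have h4 := hmin _ h3
    rw [List.length_map, ← hlen3] at h4
    refine absurd h4 (not_le.mpr ?_)
    rw [List.length_filter_lt_length_iff_exists]
    exact ⟨_, hs3, by simp⟩
  have hl0 : ∃ c, ((a, 0), c) ∈ L2 := by
    obtain ⟨c, h⟩ := (hI lo).mp (Finset.min'_mem I hIne)
    have := hmem _ _ h
    rw [sub_self] at this
    exact ⟨c, this⟩
  have hlN : ∃ c, ((a, hi - lo), c) ∈ L2 := by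
    obtain ⟨c, h⟩ := (hI hi).mp (Finset.max'_mem I hIne)
    exact ⟨c, hmem _ _ h⟩
  have hgood := IH _ L3 (by omega)
  refine ⟨hi - lo, hN, FreeGroup.mk L3, hgood, hconj, hletter _ hl0, ?_, ?_⟩
  · intro hRt
    by_contra hcon
    push Not at hcon
    refine hRt (isConj_kill t R _ hL2 ?_)
    have hall : ∀ p ∈ L2, p.1.2 = 0 := by
      rintro ⟨p, c⟩ hp
      have hp' := hp
      rw [← hL3] at hp'
      obtain ⟨⟨s', c'⟩, hq, e⟩ := List.mem_map.mp hp'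
      simp only [Prod.mk.injEq] at e
      obtain ⟨e1, e2⟩ := e
      subst e1
      by_contra h0
      exact hletter s' ⟨c, hp⟩ (hcon s' h0)
    clear_value L2
    clear hmem hL2 hL3 hmap hletter hl0 hlN
    induction L2 with
    | nil => simp [← FreeGroup.one_eq_mk]
    | cons p L ih =>
      obtain ⟨⟨y, j⟩, c⟩ := p
      have h0 : j = 0 := hall _ List.mem_cons_self
      subst h0
      rw [mk_cons_eq, map_mul, map_mul, ih fun q hq => hall q (List.mem_cons_of_mem _ hq)]
      congr 1
      have := y.2
      cases c <;> simp [theta, kill, this]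
  · exact struct t R n a (hi - lo) hN (FreeGroup.mk L3) hconj
      (hgood.fs _ (hletter _ hl0)) (hgood.fs _ (hletter _ hlN))

open scoped Classical in
theorem caseOne {X : Type} (t : X) (R : FreeGroup X) (m n : ℕ)
    (IH : ∀ (Z : Type) (L : List (Z × Bool)), L.length ≤ m → Good n (FreeGroup.mk L))
    (L : List (X × Bool)) (hL : IsConj R (FreeGroup.mk L))
    (hlen : (L.filter (fun p => p.1 ≠ t)).length ≤ m) (hexp : expo t R = 1) : Good n R := by
  have key0 : ∃ L', IsConj R (theta t (FreeGroup.mk L')) ∧ L'.length ≤ m := by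
    obtain ⟨L', h1, h2⟩ := rewriting t L
    have h3 := (expo t).map_isConj hL
    rw [hexp] at h3
    have h4 : expo t (FreeGroup.mk L) = 1 := isConj_one_right.mp h3
    rw [h4] at h1
    rw [h1] at hL
    exact ⟨L', by simpa using hL, by omega⟩
  obtain ⟨L0, hL0, hL0m⟩ := key0
  have hex : ∃ l, ∃ L1, IsConj R (theta t (FreeGroup.mk L1)) ∧ L1.length = l := ⟨_, L0, hL0, rfl⟩
  have hm0 : Nat.find hex ≤ m := (Nat.find_min' hex ⟨L0, hL0, rfl⟩).trans hL0m
  obtain ⟨L1, hc, hl1⟩ := Nat.find_spec hex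
  have hmin : ∀ L2, IsConj R (theta t (FreeGroup.mk L2)) → L1.length ≤ L2.length := by
    intro L2 h2
    rw [hl1]
    exact Nat.find_min' hex ⟨L2, h2, rfl⟩
  have hlen1 : L1.length ≤ m := by omega
  have hne : R ≠ 1 → ∃ a i c, ((a, i), c) ∈ L1 := by
    intro hR
    rcases L1 with _ | ⟨⟨⟨a, i⟩, c⟩, L1⟩
    · exfalso
      rw [← FreeGroup.one_eq_mk, map_one] at hc
      exact hR (isConj_one_left.mp hc)
    · exact ⟨a, i, c, List.mem_cons_self⟩
  refine ⟨?_, ?_, ?_⟩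
  · intro x hx w hwx hw
    by_cases hxt : x = t
    · subst hxt
      obtain ⟨a, ha⟩ := hne (by rintro rfl; simp at hx)
      obtain ⟨N, hN, r, hgood, hconj, -, h0, K, _, Ψ, h1, h2, -⟩ :=
        core x R m n IH L1 hc hlen1 hmin a ha
      obtain ⟨s, hs0, hs⟩ := h0 hx
      let v : FreeGroup X →* FreeGroup (SS x a N) := FreeGroup.lift fun z =>
        if h : z = x then 1 else of ⟨(⟨z, h⟩, 0), fun _ => ⟨le_rfl, hN⟩⟩
      have hv : theta x (FreeGroup.map Subtype.val (v w)) = kill x w := by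
        have : (theta x).comp ((FreeGroup.map Subtype.val).comp v) = kill x := by
          ext z
          by_cases hz : z = x <;> simp [v, hz, kill, theta]
        exact DFunLike.congr_fun this w
      have hk : kill s (v w) = v w := by
        have : (kill s).comp v = v := by
          ext z
          by_cases hz : z = x
          · simp [v, hz]
          · have : (⟨(⟨z, hz⟩, 0), fun _ => ⟨le_rfl, hN⟩⟩ : SS x a N) ≠ s := by
              rintro rfl
              exact hs0 rfl
            simp [v, hz, kill, this]
        exact DFunLike.congr_fun this w
      have h3 := hgood.fs s hs (v w) hk ((h1 _).mp (by rw [hv, hwx]; exact h2 w hw))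
      rw [← hwx, ← hv, h3, map_one, map_one]
    · have ha : ∃ i c, (((⟨x, hxt⟩ : {y : X // y ≠ t}), i), c) ∈ L1 := by
        by_contra hcon
        push Not at hcon
        refine hx (isConj_kill x R _ hc ?_)
        clear hne hmin hlen1 hl1 hc
        induction L1 with
        | nil => simp [← FreeGroup.one_eq_mk]
        | cons p L ih =>
          obtain ⟨⟨y, j⟩, c⟩ := p
          rw [mk_cons_eq, map_mul, map_mul,
            ih fun i c h => hcon i c (List.mem_cons_of_mem _ h)]
          congr 1
          have hy : y.1 ≠ x := by
            rintro rfl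
            exact hcon j c List.mem_cons_self
          have ht : t ≠ x := fun h => hxt h.symm
          cases c <;> simp [theta, kill, hy, ht]
      obtain ⟨N, hN, r, hgood, hconj, h0, -, K, _, Ψ, h1, h2, -⟩ :=
        core t R m n IH L1 hc hlen1 hmin _ ha
      have hew : expo t w = 1 := nc_hom (expo t) (by rw [map_pow, hexp, one_pow]) hw
      obtain ⟨w', hw'⟩ : ∃ w', w = theta t w' := by
        obtain ⟨Lw, rfl⟩ : ∃ Lw, w = FreeGroup.mk Lw := ⟨w.toWord, FreeGroup.mk_toWord.symm⟩
        obtain ⟨L', h, -⟩ := rewriting t Lw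
        rw [hew] at h
        exact ⟨_, by simpa using h⟩
      let κ : FreeGroup ({y : X // y ≠ t} × ℤ) →* FreeGroup (SS t ⟨x, hxt⟩ N) :=
        FreeGroup.lift fun p => if h : p.1.1 = x then 1 else
          of ⟨p, fun e => absurd (congrArg Subtype.val e) h⟩
      have hκ : theta t (FreeGroup.map Subtype.val (κ w')) = w := by
        have : (theta t).comp ((FreeGroup.map Subtype.val).comp κ) = (kill x).comp (theta t) := by
          ext ⟨y, j⟩
          have ht : t ≠ x := fun h => hxt h.symm
          by_cases hz : y.1 = x <;> simp [κ, hz, kill, theta, ht]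
        have h := DFunLike.congr_fun this w'
        simp only [MonoidHom.comp_apply] at h
        rw [h, ← hw', hwx]
      have h3 := hgood.fs _ h0 (κ w') (by
        have : (kill (⟨(⟨x, hxt⟩, 0), fun _ => ⟨le_rfl, hN⟩⟩ : SS t ⟨x, hxt⟩ N)).comp κ = κ := by
          ext ⟨y, j⟩
          by_cases hz : y.1 = x
          · simp [κ, hz]
          · have : y ≠ ⟨x, hxt⟩ := fun e => hz (congrArg Subtype.val e)
            simp [κ, hz, kill, this]
        exact DFunLike.congr_fun this w') ((h1 _).mp (by rw [hκ]; exact h2 w hw))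
      rw [← hκ, h3, map_one, map_one]
  · intro hR k hk
    obtain ⟨a, ha⟩ := hne hR
    obtain ⟨N, hN, r, hgood, hconj, -, -, K, _, Ψ, h1, h2, -⟩ :=
      core t R m n IH L1 hc hlen1 hmin a ha
    refine hgood.ord ?_ k ?_
    · rintro rfl
      rw [map_one, map_one] at hconj
      exact hR (isConj_one_left.mp hconj)
    · rw [← h1, map_pow, map_pow, map_pow]
      refine hom_conj_pow Ψ hconj ?_
      rw [← map_pow]
      exact h2 _ hk
  · intro hn hNP g k hk hg
    obtain ⟨a, ha⟩ := hne hNP.ne_one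
    obtain ⟨N, hN, r, hgood, hconj, -, -, K, _, Ψ, h1, h2, h3⟩ :=
      core t R m n IH L1 hc hlen1 hmin a ha
    obtain ⟨h4, h5⟩ := h3 (hgood.tf hn (by
      intro S j hj e
      refine hNP.conj hconj (theta t (FreeGroup.map Subtype.val S)) j hj ?_
      rw [e, map_pow, map_pow]))
    refine h5 g (h4 g k hk ?_)
    rw [← map_pow]
    exact h2 _ hg

end KMS

namespace KMS
open FreeGroup (of lift_apply_of)

theorem nc_map {F K : Type} [Group F] [Group K] (f : F →* K) {r w : F} {n : ℕ}
    (hw : w ∈ Subgroup.normalClosure {r ^ n}) : f w ∈ Subgroup.normalClosure {f r ^ n} := by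
  let π := QuotientGroup.mk' (Subgroup.normalClosure {f r ^ n})
  have hπ : ∀ v, π v = 1 ↔ v ∈ Subgroup.normalClosure {f r ^ n} := fun v =>
    QuotientGroup.eq_one_iff v
  refine (hπ _).mp (nc_hom (π.comp f) (r := r ^ n) ?_ hw)
  rw [MonoidHom.comp_apply, hπ, map_pow]
  exact Subgroup.subset_normalClosure rfl

open scoped Classical in
/-- `g` is represented by a word with `l` letters other than `b` -/
def Cnt {X : Type} (b : X) (g : FreeGroup X) (l : ℕ) : Prop :=
  ∃ L : List (X × Bool), g = FreeGroup.mk L ∧ (L.filter (fun p => p.1 ≠ b)).length = l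

theorem Cnt.mul {X : Type} {b : X} {g h : FreeGroup X} {l k : ℕ} (hg : Cnt b g l)
    (hh : Cnt b h k) : Cnt b (g * h) (l + k) := by
  obtain ⟨L, rfl, rfl⟩ := hg
  obtain ⟨K, rfl, rfl⟩ := hh
  exact ⟨L ++ K, FreeGroup.mul_mk, by simp⟩

theorem Cnt.inv {X : Type} {b : X} {g : FreeGroup X} {l : ℕ} (hg : Cnt b g l) :
    Cnt b g⁻¹ l := by
  obtain ⟨L, rfl, rfl⟩ := hg
  refine ⟨FreeGroup.invRev L, FreeGroup.inv_mk, ?_⟩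
  simp only [FreeGroup.invRev, List.filter_reverse, List.length_reverse, List.filter_map,
    List.length_map]
  rfl

theorem Cnt.one {X : Type} (b : X) : Cnt b (1 : FreeGroup X) 0 := ⟨[], rfl, by simp⟩

theorem Cnt.b {X : Type} (b : X) : Cnt b (of b) 0 := ⟨[(b, true)], rfl, by simp⟩

theorem Cnt.z {X : Type} {b z : X} (h : z ≠ b) : Cnt b (of z) 1 := ⟨[(z, true)], rfl, by simp [h]⟩

theorem Cnt.pow {X : Type} (b : X) (p : ℕ) : Cnt b (of b ^ p) 0 := by
  induction p with
  | zero => simpa using Cnt.one b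
  | succ p ih => rw [pow_succ]; exact ih.mul (Cnt.b b)

theorem Cnt.zpow {X : Type} (b : X) (q : ℤ) : Cnt b (of b ^ q) 0 := by
  obtain ⟨p, rfl | rfl⟩ := q.eq_nat_or_neg
  · rw [zpow_natCast]; exact Cnt.pow b p
  · rw [zpow_neg, zpow_natCast]; exact (Cnt.pow b p).inv

open scoped Classical in
theorem Cnt.hom {X : Type} {b : X} (η : FreeGroup X →* FreeGroup X)
    (h0 : Cnt b (η (of b)) 0) (h1 : ∀ z, z ≠ b → Cnt b (η (of z)) 1) (L : List (X × Bool)) :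
    Cnt b (η (FreeGroup.mk L)) (L.filter (fun p => p.1 ≠ b)).length := by
  induction L with
  | nil => simpa [← FreeGroup.one_eq_mk] using Cnt.one b
  | cons p L ih =>
    obtain ⟨z, c⟩ := p
    rw [mk_cons_eq, map_mul]
    by_cases hz : z = b
    · subst hz
      have : Cnt z (η (cond c (of z) (of z)⁻¹)) 0 := by
        cases c
        · simpa using h0.inv
        · simpa using h0
      simpa using this.mul ih
    · have : Cnt b (η (cond c (of z) (of z)⁻¹)) 1 := by
        cases c
        · simpa using (h1 z hz).inv
        · simpa using h1 z hz
      have := this.mul ih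
      rw [List.filter_cons_of_pos (by simpa using hz), List.length_cons, add_comm]
      exact this

open scoped Classical in
/-- the automorphism `x ↦ x b ^ q` -/
noncomputable def tw {X : Type} (x b : X) (q : ℤ) : FreeGroup X →* FreeGroup X :=
  FreeGroup.lift fun z => if z = x then of x * of b ^ q else of z

theorem tw_tw {X : Type} (x b : X) (hxb : x ≠ b) (q : ℤ) (w) : tw x b (-q) (tw x b q w) = w := by
  have : (tw x b (-q)).comp (tw x b q) = MonoidHom.id _ := by
    ext z
    by_cases hz : z = x <;> simp [tw, hz, hxb.symm]
  exact DFunLike.congr_fun this w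

open scoped Classical in
theorem caseTwo {X : Type} (x b : X) (hxb : x ≠ b) (R : FreeGroup X) (m n : ℕ)
    (IH : ∀ (Z : Type) (L : List (Z × Bool)), L.length ≤ m → Good n (FreeGroup.mk L))
    (L : List (X × Bool)) (hL : IsConj R (FreeGroup.mk L))
    (hlen : (L.filter (fun p => p.1 ≠ b)).length ≤ m) (hexp : expo x R ≠ 1) :
    (∀ w, kill x w = w → w ∈ Subgroup.normalClosure {R ^ n} → w = 1) ∧
    (n = 1 → NP R → ∀ (g : FreeGroup X) (k : ℕ), 0 < k →
      g ^ k ∈ Subgroup.normalClosure {R ^ n} → g ∈ Subgroup.normalClosure {R ^ n}) := by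
  obtain ⟨p, q, hp, hpq⟩ : ∃ (p : ℕ) (q : ℤ), 0 < p ∧
      (p : ℤ) * Multiplicative.toAdd (expo b R) + q * Multiplicative.toAdd (expo x R) = 0 := by
    have h0 : Multiplicative.toAdd (expo x R) ≠ 0 := fun h => hexp (by simpa using h)
    refine ⟨(Multiplicative.toAdd (expo x R)).natAbs,
      -Multiplicative.toAdd (expo b R) * (Multiplicative.toAdd (expo x R)).sign, by omega, ?_⟩
    have h1 := Int.sign_mul_natAbs (Multiplicative.toAdd (expo x R))
    rcases lt_or_gt_of_ne h0 with h | h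
    · rw [Int.sign_eq_neg_one_of_neg h] at h1 ⊢
      linear_combination (-Multiplicative.toAdd (expo b R)) * h1
    · rw [Int.sign_eq_one_of_pos h] at h1 ⊢
      linear_combination (Multiplicative.toAdd (expo b R)) * h1
  let η : FreeGroup X →* FreeGroup X := (tw x b q).comp (powGen b p)
  have hηb : η (of b) = of b ^ p := by simp [η, powGen, tw, hxb.symm]
  have hηx : η (of x) = of x * of b ^ q := by simp [η, powGen, tw, hxb]
  have hηz : ∀ z, z ≠ b → z ≠ x → η (of z) = of z := by
    intro z h1 h2
    simp [η, powGen, tw, h1, h2]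
  have he1 : expo b (η R) = 1 := by
    have : (expo b).comp η = (expo b) ^ p * (expo x) ^ q := by
      ext z
      rw [MonoidHom.comp_apply]
      by_cases hzb : z = b
      · subst hzb
        rw [hηb]
        simp [expo, hxb.symm]
      · by_cases hzx : z = x
        · subst hzx
          rw [hηx]
          simp [expo, hxb]
        · rw [hηz z hzb hzx]
          simp [expo, hzb, hzx]
    have := DFunLike.congr_fun this R
    rw [MonoidHom.comp_apply] at this
    rw [this]
    apply Multiplicative.toAdd.injective
    simpa using hpq
  have he2 : expo x (η R) = expo x R := by
    have : (expo x).comp η = expo x := by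
      ext z
      rw [MonoidHom.comp_apply]
      by_cases hzb : z = b
      · subst hzb
        rw [hηb]
        simp [expo, hxb.symm]
      · by_cases hzx : z = x
        · subst hzx
          rw [hηx]
          simp [expo, hxb.symm]
        · rw [hηz z hzb hzx]
    exact DFunLike.congr_fun this R
  have hgood : Good n (η R) := by
    obtain ⟨L2, h1, h2⟩ := Cnt.hom (b := b) η (by rw [hηb]; exact Cnt.pow b p) (by
      intro z hz
      by_cases hzx : z = x
      · subst hzx
        rw [hηx]
        exact (Cnt.z hz).mul (Cnt.zpow b q)
      · rw [hηz z hz hzx]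
        exact Cnt.z hz) L
    refine caseOne b (η R) m n IH L2 ?_ (h2.trans_le hlen) he1
    rw [← h1]
    exact η.map_isConj hL
  have hkx : ∀ v : FreeGroup X, expo x (kill x v) = 1 := by
    intro v
    have : (expo x).comp (kill x) = 1 := by
      ext z
      by_cases hz : z = x <;> simp [expo, kill, hz]
    exact DFunLike.congr_fun this v
  have hnk : ¬ IsConj (η R) (kill x (η R)) := by
    intro h
    have := (expo x).map_isConj h
    rw [hkx, he2] at this
    exact hexp (isConj_one_left.mp this)
  have hηN : ∀ w ∈ Subgroup.normalClosure {R ^ n}, η w ∈ Subgroup.normalClosure {(η R) ^ n} := by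
    intro w hw
    exact nc_map η hw
  have hfs : ∀ w, kill x w = w → w ∈ Subgroup.normalClosure {R ^ n} → w = 1 := by
    intro w hwx hw
    have h1 : (kill x).comp (η.comp (kill x)) = η.comp (kill x) := by
      ext z
      by_cases hzx : z = x
      · simp [kill, hzx]
      · by_cases hzb : z = b
        · subst hzb
          have : kill x (of z) = of z := by simp [kill, hzx]
          simp [this, hηb]
        · have : kill x (of z) = of z := by simp [kill, hzx]
          simp [this, hηz z hzb hzx]
    have h2 : η.comp (kill x) = (powGen b p).comp (kill x) := by
      ext z
      by_cases hzx : z = x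
      · simp [kill, hzx]
      · by_cases hzb : z = b
        · subst hzb
          have : kill x (of z) = of z := by simp [kill, hzx]
          simp only [MonoidHom.comp_apply, this, hηb]
          simp [powGen]
        · have : kill x (of z) = of z := by simp [kill, hzx]
          simp only [MonoidHom.comp_apply, this, hηz z hzb hzx]
          simp [powGen, hzb]
    have h1 := DFunLike.congr_fun h1 w
    have h2 := DFunLike.congr_fun h2 w
    simp only [MonoidHom.comp_apply, hwx] at h1 h2
    have h3 := hgood.fs x hnk (η w) h1 (hηN w hw)
    rw [h2] at h3
    exact powGen_injective b p hp (h3.trans (map_one _).symm)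
  refine ⟨hfs, ?_⟩
  intro hn hNP g k hk hg
  have hNP2 : NP (η R) := by
    intro S j hj e
    have e2 : powGen b p R = (tw x b (-q) S) ^ j := by
      rw [← map_pow, ← e]
      exact (tw_tw x b hxb q _).symm
    obtain ⟨s, hs⟩ := powGen_root b x hxb p hp R _ hexp j e2
    exact hNP s j hj hs
  have h1 : η g ∈ Subgroup.normalClosure {(η R) ^ n} :=
    hgood.tf hn hNP2 (η g) k hk (by
      have := hηN _ hg
      rwa [map_pow η g k] at this)
  let π := QuotientGroup.mk' (Subgroup.normalClosure {R ^ n})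
  have hπ : ∀ v, π v = 1 ↔ v ∈ Subgroup.normalClosure {R ^ n} := fun v =>
    QuotientGroup.eq_one_iff v
  obtain ⟨K, _, i, T, hi, hT⟩ := root_exists (π (of b)) (by
    intro j hj
    rw [← map_zpow, hπ] at hj
    have h2 := hfs _ (by rw [map_zpow]; simp [kill, hxb.symm]) hj
    have h3 := congrArg (expo b) h2
    rw [map_zpow] at h3
    have h4 : expo b (of b) = Multiplicative.ofAdd 1 := by simp [expo]
    rw [h4, map_one (expo b)] at h3
    simpa using congrArg Multiplicative.toAdd h3) p hp
  let κ : FreeGroup X →* K := FreeGroup.lift fun z =>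
    if z = b then T else if z = x then i (π (of x)) * (T ^ q)⁻¹ else i (π (of z))
  have hκ : ∀ v, κ (η v) = i (π v) := by
    intro v
    have : κ.comp η = i.comp π := by
      ext z
      simp only [MonoidHom.comp_apply]
      by_cases hzb : z = b
      · subst hzb
        rw [hηb, map_pow, ← hT]
        simp [κ]
      · by_cases hzx : z = x
        · subst hzx
          rw [hηx, map_mul, map_zpow]
          simp [κ, hzb]
        · rw [hηz z hzb hzx]
          simp [κ, hzb, hzx]
    exact DFunLike.congr_fun this v
  have h2 := nc_hom κ (r := (η R) ^ n) (by
    rw [← map_pow, hκ, (hπ _).mpr (Subgroup.subset_normalClosure rfl), map_one]) h1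
  rw [hκ] at h2
  exact (hπ g).mp (hi (h2.trans (map_one _).symm))

theorem all_letter {X : Type} (x : X) (L : List (X × Bool)) (h : ∀ p ∈ L, p.1 = x) :
    ∃ k : ℤ, FreeGroup.mk L = of x ^ k := by
  induction L with
  | nil => exact ⟨0, rfl⟩
  | cons p L ih =>
    obtain ⟨k, hk⟩ := ih fun q hq => h q (List.mem_cons_of_mem _ hq)
    obtain ⟨z, c⟩ := p
    have : z = x := h _ List.mem_cons_self
    subst this
    rw [mk_cons_eq, hk]
    cases c
    · exact ⟨-1 + k, by rw [zpow_add]; simp⟩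
    · exact ⟨1 + k, by rw [zpow_add]; simp⟩

theorem ord_of_expo {X : Type} (x : X) (R : FreeGroup X) (n m : ℕ) (h : expo x R ≠ 1)
    (hm : R ^ m ∈ Subgroup.normalClosure {R ^ n}) : n ∣ m := by
  let A := Multiplicative.toAdd (expo x R)
  have hA : A ≠ 0 := fun h' => h (by simpa [A] using h')
  let f : FreeGroup X →* Multiplicative (ZMod (A.natAbs * n)) :=
    (AddMonoidHom.toMultiplicative (Int.castAddHom (ZMod (A.natAbs * n)))).comp (expo x)
  have hf : ∀ j : ℕ, f (R ^ j) = 1 ↔ ((A.natAbs * n : ℕ) : ℤ) ∣ j * A := by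
    intro j
    rw [← ZMod.intCast_zmod_eq_zero_iff_dvd]
    have : Multiplicative.toAdd (f (R ^ j)) = ((j * A : ℤ) : ZMod (A.natAbs * n)) := by
      simp [f, A]
    rw [← this]
    exact Iff.rfl
  have h1 := nc_hom f ((hf n).mpr (by
    rw [Nat.cast_mul, mul_comm, mul_comm (n : ℤ) A, mul_comm A]
    exact mul_dvd_mul_left _ (by simp))) hm
  rw [hf, Int.natCast_dvd, Int.natAbs_mul, Int.natAbs_natCast, mul_comm] at h1
  exact Nat.dvd_of_mul_dvd_mul_right (by omega) h1

theorem main_step (n m : ℕ)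
    (IH : ∀ (Z : Type) (L : List (Z × Bool)), L.length ≤ m → Good n (FreeGroup.mk L))
    (X : Type) (L : List (X × Bool)) (hL : L.length ≤ m + 1) : Good n (FreeGroup.mk L) := by
  classical
  set R := FreeGroup.mk L with hR
  have hex : ∃ l, ∃ L0, IsConj R (FreeGroup.mk L0) ∧ L0.length = l := ⟨_, L, IsConj.refl _, rfl⟩
  have hm0 : Nat.find hex ≤ m + 1 := (Nat.find_min' hex ⟨L, IsConj.refl _, rfl⟩).trans hL
  obtain ⟨L0, hc, hl0⟩ := Nat.find_spec hex
  have hlt : ∀ x, (∃ c, (x, c) ∈ L0) → (L0.filter (fun p => p.1 ≠ x)).length ≤ m := by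
    rintro x ⟨c, hx⟩
    have : (L0.filter (fun p => p.1 ≠ x)).length < L0.length := by
      rw [List.length_filter_lt_length_iff_exists]
      exact ⟨_, hx, by simp⟩
    omega
  have hone : ∀ x, (∃ c, (x, c) ∈ L0) → expo x R = 1 → Good n R := fun x hx he =>
    caseOne x R m n IH L0 hc (hlt x hx) he
  have hnil : L0 = [] → R = 1 := by
    rintro rfl
    rw [← FreeGroup.one_eq_mk] at hc
    exact isConj_one_left.mp hc
  have hne : R ≠ 1 → ∃ x c, (x, c) ∈ L0 := by
    intro h
    rcases L0 with _ | ⟨⟨x, c⟩, L1⟩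
    · exact absurd (hnil rfl) h
    · exact ⟨x, c, List.mem_cons_self⟩
  refine ⟨?_, ?_, ?_⟩
  · intro x hx w hwx hw
    have hxL : ∃ c, (x, c) ∈ L0 := by
      by_contra hcon
      push Not at hcon
      exact hx (isConj_kill x R _ hc (kill_mk_self x L0 hcon))
    by_cases hall : ∀ p ∈ L0, p.1 = x
    · obtain ⟨k, hk⟩ := all_letter x L0 hall
      have h1 := (kill x).map_isConj hc
      rw [hk, map_zpow] at h1
      have h2 : kill x (of x) = 1 := by simp [kill]
      rw [h2, one_zpow] at h1
      have h3 := isConj_one_left.mp h1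
      rw [← hwx]
      exact nc_hom (kill x) (by rw [map_pow, h3, one_pow]) hw
    · push Not at hall
      obtain ⟨⟨b, c⟩, hb, hbx⟩ := hall
      by_cases he : expo x R = 1
      · exact (hone x hxL he).fs x hx w hwx hw
      · exact (caseTwo x b (Ne.symm hbx) R m n IH L0 hc (hlt b ⟨c, hb⟩) he).1 w hwx hw
  · intro hR1 j hj
    obtain ⟨x, hx⟩ := hne hR1
    by_cases he : expo x R = 1
    · exact (hone x hx he).ord hR1 j hj
    · exact ord_of_expo x R n j he hj
  · intro hn hNP g k hk hg
    obtain ⟨x, hx⟩ := hne hNP.ne_one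
    by_cases hall : ∀ p ∈ L0, p.1 = x
    · obtain ⟨j, hj⟩ := all_letter x L0 hall
      rw [hj] at hc
      subst hn
      rw [pow_one] at hg ⊢
      have h1 := (kill x).map_isConj hc
      rw [map_zpow] at h1
      have h2 : kill x (of x) = 1 := by simp [kill]
      rw [h2, one_zpow] at h1
      have h3 := isConj_one_left.mp h1
      have h4 := nc_hom (kill x) h3 hg
      rw [map_pow] at h4
      have h5 : kill x g = 1 := by
        have := IsMulTorsionFree.pow_left_injective (M := FreeGroup X) hk.ne'
        exact this (h4.trans (one_pow k).symm)
      let π := QuotientGroup.mk' (Subgroup.normalClosure {R})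
      have hπ : ∀ v, π v = 1 ↔ v ∈ Subgroup.normalClosure {R} := fun v =>
        QuotientGroup.eq_one_iff v
      have hx1 : π (of x) = 1 := by
        have h6 := π.map_isConj hc
        rw [(hπ R).mpr (Subgroup.subset_normalClosure rfl), map_zpow] at h6
        have h7 := isConj_one_right.mp h6
        have h8 : j.natAbs = 1 := by
          have hN := hNP.conj hc
          have hj0 : j ≠ 0 := by
            rintro rfl
            exact hN.ne_one (by simp)
          obtain ⟨p, rfl | rfl⟩ := j.eq_nat_or_neg
          · simpa using hN (of x) p (by omega) (by simp)
          · simpa using hN (of x)⁻¹ p (by omega) (by simp)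
        rcases Int.natAbs_eq j with h | h <;> rw [h, h8] at h7 <;> simpa using h7
      have h9 : π.comp (kill x) = π := by
        ext z
        by_cases hz : z = x
        · subst hz
          simp [MonoidHom.comp_apply, h2, hx1]
        · simp [kill, hz]
      rw [← hπ, ← h9, MonoidHom.comp_apply, h5, map_one]
    · push Not at hall
      obtain ⟨⟨b, c⟩, hb, hbx⟩ := hall
      by_cases he : expo x R = 1
      · exact (hone x hx he).tf hn hNP g k hk hg
      · exact (caseTwo x b (Ne.symm hbx) R m n IH L0 hc (hlt b ⟨c, hb⟩) he).2 hn hNP g k hk hg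

theorem main_all (n m : ℕ) :
    ∀ (Z : Type) (L : List (Z × Bool)), L.length ≤ m → Good n (FreeGroup.mk L) := by
  induction m with
  | zero =>
    intro Z L hL
    have : L = [] := by simpa using hL
    subst this
    rw [← FreeGroup.one_eq_mk]
    refine ⟨?_, ?_, ?_⟩
    · intro x hx
      simp at hx
    · intro h
      exact absurd rfl h
    · intro _ h
      exact absurd rfl h.ne_one
  | succ m ih => exact main_step n m ih

theorem good_all {X : Type} (n : ℕ) (R : FreeGroup X) : Good n R := by
  classical
  rw [← FreeGroup.mk_toWord (x := R)]
  exact main_all n _ X _ le_rfl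

end KMS


/-- Karrass–Magnus–Solitar.  Let `X` have more than one element, let
`R` be a nontrivial element of the free group on `X` which is not a proper power, and let
`n ≥ 1`.  Then the image of `R` in `G = ⟨X; Rⁿ⟩` has order exactly `n`; in particular `G`
has a nontrivial element of finite order iff `n > 1`. -/
theorem statement_16 {X : Type} [Nontrivial X] (R : FreeGroup X) (hR1 : R ≠ 1)
    (hR : ∀ (S : FreeGroup X) (k : ℕ), 1 ≤ k → R = S ^ k → k = 1)
    (n : ℕ) (hn : 1 ≤ n) :
    orderOf (PresentedGroup.mk {R ^ n} R) = n ∧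
      ((∃ g : PresentedGroup {R ^ n}, g ≠ 1 ∧ IsOfFinOrder g) ↔ 1 < n) := by
  have hgood := KMS.good_all n R
  have hmk : ∀ v, PresentedGroup.mk {R ^ n} v = 1 ↔ v ∈ Subgroup.normalClosure {R ^ n} := fun v =>
    QuotientGroup.eq_one_iff v
  have hord : orderOf (PresentedGroup.mk {R ^ n} R) = n := by
    apply Nat.dvd_antisymm
    · apply orderOf_dvd_of_pow_eq_one
      rw [← map_pow, hmk]
      exact Subgroup.subset_normalClosure rfl
    · apply hgood.ord hR1
      rw [← hmk, map_pow]
      exact pow_orderOf_eq_one _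
  refine ⟨hord, ?_, ?_⟩
  · rintro ⟨g, hg1, hg⟩
    by_contra hn1
    obtain ⟨v, rfl⟩ := PresentedGroup.mk_surjective {R ^ n} g
    obtain ⟨k, hk, hk1⟩ := isOfFinOrder_iff_pow_eq_one.mp hg
    rw [← map_pow, hmk] at hk1
    exact hg1 ((hmk v).mpr (hgood.tf (by omega) hR v k hk hk1))
  · intro h1
    refine ⟨PresentedGroup.mk {R ^ n} R, ?_, ?_⟩
    · intro h
      rw [h, orderOf_one] at hord
      omega
    · rw [← orderOf_pos_iff]
      omega
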